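/- (Dictatorship under Pareto efficiency.) Suppose |A| ≥ 3 and the type domain 𝒰 = ∏_{i=1}^n U_i satisfies: (C1) for each agent i, U_i contains an unrestricted parallel domain, and (C2') there exists an agent i with a type in U_i that is not parallel. Then every social choice mechanism on 𝒰 that is DSIC, deterministic, IR, satisfies no subsidy, and is Pareto efficient is a dictatorship: there exists an agent i* such that for every u ∈ 𝒰, x(u) ∈ argmax_{a∈A} u_{i*,a}(0) and t_{i*}(u) = 0. -/

import Mathlib

/-!
Common framework: agents indexed by `I`, alternatives `A` (finite, nonempty).
A type of an agent is a family `u : A → ℝ → ℝ`, where `u a z` is the utility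
when alternative `a` is selected and the agent pays `z`.
-/

noncomputable section

namespace NQLSC

/-- A type (utility family) of an agent. -/
abbrev Util (A : Type*) := A → ℝ → ℝ

variable {A I : Type*}

/-- (S1): each `u a` is continuous and strictly decreasing in the payment. -/
def S1 (u : Util A) : Prop := ∀ a, Continuous (u a) ∧ StrictAnti (u a)

/-- `min_{a'∈A} u_{a'}(0)`, the value of the worst alternative at zero payment. -/
def minVal [Fintype A] [Nonempty A] (u : Util A) : ℝ :=
  Finset.univ.inf' Finset.univ_nonempty (fun a => u a 0)

/-- (S2): as the payment tends to `+∞`, the utility of every alternative drops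
(strictly) below `min_{a'} u_{a'}(0)`; for strictly decreasing utilities this is
equivalent to the utility being below that value at some payment. -/
def S2 [Fintype A] [Nonempty A] (u : Util A) : Prop :=
  ∀ a, ∃ z : ℝ, u a z < minVal u

/-- The willingness to pay `p_a = u_a⁻¹(min_{a'} u_{a'}(0))` (under (S1),(S2) this
`sInf` is the unique payment at which `u a` attains `minVal u`). -/
def wtp [Fintype A] [Nonempty A] (u : Util A) (a : A) : ℝ :=
  sInf {z : ℝ | u a z ≤ minVal u}

/-- A parallel type: (S1), (S2), and for all `a, b` with `v_a ≥ v_b` and all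
`z ∈ [0, p_b]`, `u_a (z + (p_a − p_b)) = u_b z`. -/
def IsParallel [Fintype A] [Nonempty A] (u : Util A) : Prop :=
  S1 u ∧ S2 u ∧ ∀ a b : A, u b 0 ≤ u a 0 → ∀ z : ℝ, 0 ≤ z → z ≤ wtp u b →
    u a (z + (wtp u a - wtp u b)) = u b z

/-- Unrestricted willingness to pay: every nonnegative vector with a zero entry is
the willingness-to-pay vector of some type in the domain. -/
def UnrestrictedWTP [Fintype A] [Nonempty A] (U : Set (Util A)) : Prop :=
  ∀ lam : A → ℝ, (∀ a, 0 ≤ lam a) → (∃ a, lam a = 0) →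
    ∃ u ∈ U, ∀ a, wtp u a = lam a

/-- Dominant-strategy incentive compatibility of a (deterministic) mechanism `(x,t)`
on the domain `𝒰 = ∏ i, U i`. -/
def DSIC [DecidableEq I] (U : I → Set (Util A)) (x : (I → Util A) → A)
    (t : (I → Util A) → I → ℝ) : Prop :=
  ∀ uh : I → Util A, (∀ j, uh j ∈ U j) → ∀ i, ∀ ui ∈ U i,
    ui (x uh) (t uh i) ≤
      ui (x (Function.update uh i ui)) (t (Function.update uh i ui) i)

/-- Individual rationality. -/
def IR [Fintype A] [Nonempty A] [DecidableEq I] (U : I → Set (Util A))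
    (x : (I → Util A) → A) (t : (I → Util A) → I → ℝ) : Prop :=
  ∀ uh : I → Util A, (∀ j, uh j ∈ U j) → ∀ i, ∀ ui ∈ U i,
    minVal ui ≤ ui (x (Function.update uh i ui)) (t (Function.update uh i ui) i)

/-- No subsidy: the mechanism never makes positive transfers to an agent. -/
def NoSubsidy (U : I → Set (Util A)) (t : (I → Util A) → I → ℝ) : Prop :=
  ∀ u : I → Util A, (∀ j, u j ∈ U j) → ∀ i, 0 ≤ t u i

/-- Ontoness of the choice rule on the given domain. -/
def OntoMech (U : I → Set (Util A)) (x : (I → Util A) → A) : Prop :=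
  ∀ a, ∃ u : I → Util A, (∀ j, u j ∈ U j) ∧ x u = a

/-- Pareto efficiency: at no profile can one select another alternative and adjust
payments so that all agents are weakly better off, some agent strictly better off, and
the total payment to the mechanism is not reduced. -/
def ParetoEfficient [Fintype I] (U : I → Set (Util A)) (x : (I → Util A) → A)
    (t : (I → Util A) → I → ℝ) : Prop :=
  ∀ u : I → Util A, (∀ j, u j ∈ U j) →
    ¬ ∃ (b : A) (s : I → ℝ), b ≠ x u ∧
      (∀ i, u i (x u) (t u i) ≤ u i b (s i)) ∧
      (∃ i, u i (x u) (t u i) < u i b (s i)) ∧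
      (∑ i, t u i) ≤ (∑ i, s i)

section Weights

variable {I : Type*} [Fintype I]

/-- An additively closed set of vectors which contains the positive orthant, omits the origin and
meets every antipodal pair up to small translations lies in a closed half-space whose normal is a
vector of nonnegative weights summing to one. -/
theorem exists_weights_of_total_cone [DecidableEq I] (K : Set (I → ℝ))
    (hadd : ∀ α ∈ K, ∀ β ∈ K, α + β ∈ K) (hpos : ∀ α : I → ℝ, (∀ i, 0 < α i) → α ∈ K)
    (hzero : (0 : I → ℝ) ∉ K)
    (htotal : ∀ α ∉ K, ∀ δ : ℝ, 0 < δ → (fun i => δ - α i) ∈ K) :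
    ∃ k : I → ℝ, (∀ i, 0 ≤ k i) ∧ ∑ i, k i = 1 ∧ ∀ α ∈ K, 0 ≤ ∑ i, k i * α i := by
  set S : (I → ℝ) → Set ℝ := fun α => {r | (fun i => r - α i) ∈ K} with hSdef
  have memS : ∀ α r, (∀ i, α i < r) → r ∈ S α := fun α r h =>
    hpos _ fun i => sub_pos.2 (h i)
  have lowS : ∀ α, ∀ r ∈ S α, ∃ i, α i ≤ r := by
    intro α r hr
    by_contra! hcon
    apply hzero
    have h := hadd _ hr _ (hpos (fun i => α i - r) fun i => sub_pos.2 (hcon i))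
    convert h using 1
    ext i
    simp
  have abs_le : ∀ (α : I → ℝ) i, |α i| ≤ ‖α‖ := fun α i => norm_le_pi_norm α i
  have lowS' : ∀ α, ∀ r ∈ S α, -‖α‖ ≤ r := by
    intro α r hr
    obtain ⟨i, hi⟩ := lowS α r hr
    linarith [neg_le_of_abs_le (abs_le α i)]
  have bdd : ∀ α, BddBelow (S α) := fun α => ⟨-‖α‖, lowS' α⟩
  have nonempty : ∀ α, (S α).Nonempty := fun α =>
    ⟨‖α‖ + 1, memS _ _ fun i => by linarith [le_of_abs_le (abs_le α i)]⟩
  set φ : (I → ℝ) → ℝ := fun α => sInf (S α) with hφ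
  have φ_le : ∀ α, ∀ r ∈ S α, φ α ≤ r := fun α r hr => csInf_le (bdd α) hr
  have le_φ : ∀ α c, (∀ r ∈ S α, c ≤ r) → c ≤ φ α := fun α c h => le_csInf (nonempty α) h
  have φ_subadd : ∀ α β, φ (α + β) ≤ φ α + φ β := by
    intro α β
    have h₁ : ∀ s ∈ S β, φ (α + β) - s ≤ φ α := by
      intro s hs
      refine le_φ _ _ fun r hr => ?_
      have : r + s ∈ S (α + β) := by
        have h := hadd _ hr _ hs
        simp only [hSdef, Set.mem_ofPred_eq]
        convert h using 1
        ext i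
        simp only [Pi.add_apply]
        ring
      linarith [φ_le _ _ this]
    have h₂ : φ (α + β) - φ α ≤ φ β := le_φ _ _ fun s hs => by linarith [h₁ s hs]
    linarith
  have φ_neg : ∀ α, φ (-α) ≤ -φ α := by
    intro α
    refine le_of_forall_lt fun r hr => ?_
    obtain ⟨q, hrq, hq⟩ := exists_between hr
    have hnot : (fun i => q - (-α) i) ∉ K := fun h => absurd (φ_le (-α) q h) (not_le.2 hq)
    have h : (q - r) / 2 - q ∈ S α := by
      have h := htotal _ hnot ((q - r) / 2) (by linarith)
      simp only [hSdef, Set.mem_ofPred_eq]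
      convert h using 1
      ext i
      simp only [Pi.neg_apply]
      ring
    linarith [φ_le _ _ h]
  have φ_add : ∀ α β, φ (α + β) = φ α + φ β := by
    intro α β
    refine le_antisymm (φ_subadd α β) ?_
    have h := φ_subadd (α + β) (-β)
    rw [add_neg_cancel_right] at h
    linarith [φ_neg β]
  have φ_bound : ∀ α, ‖φ α‖ ≤ 1 * ‖α‖ := by
    intro α
    rw [one_mul, Real.norm_eq_abs, abs_le']
    refine ⟨le_of_forall_pos_le_add fun ε hε => φ_le _ _ (memS _ _ fun i => ?_), ?_⟩
    · linarith [le_of_abs_le (abs_le α i)]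
    · linarith [le_φ α (-‖α‖) (lowS' α)]
  let Φ : (I → ℝ) →+ ℝ := AddMonoidHom.mk' φ φ_add
  have hcont : Continuous Φ := AddMonoidHomClass.continuous_of_bound Φ 1 φ_bound
  let L := Φ.toRealLinearMap hcont
  have hL : ∀ α, L α = φ α := fun α => rfl
  have hsum : ∀ α : I → ℝ, φ α = ∑ i, φ (Pi.single i 1) * α i := by
    intro α
    rw [← hL]
    conv_lhs => rw [pi_eq_sum_univ' α]
    rw [map_sum]
    refine Finset.sum_congr rfl fun i _ => ?_
    rw [map_smul, hL, smul_eq_mul, mul_comm]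
  refine ⟨fun i => φ (Pi.single i 1), fun i => ?_, ?_, fun α hα => ?_⟩
  · refine le_φ _ _ fun r hr => ?_
    obtain ⟨j, hj⟩ := lowS _ r hr
    refine le_trans ?_ hj
    rw [Pi.single_apply]
    split_ifs <;> norm_num
  · have h := hsum fun _ => 1
    simp only [mul_one] at h
    rw [← h]
    refine le_antisymm (le_of_forall_pos_le_add fun ε hε => φ_le _ _ (memS _ _ fun i => ?_))
      (le_φ _ _ fun r hr => ?_)
    · linarith
    · obtain ⟨i, hi⟩ := lowS _ r hr
      exact hi
  · rw [← hsum]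
    have h : φ (-α) ≤ 0 := φ_le _ _ (by simpa [hSdef] using hα)
    have h0 : φ (α + -α) = φ α + φ (-α) := φ_add _ _
    have hz : φ 0 = 0 := map_zero Φ
    rw [add_neg_cancel, hz] at h0
    linarith

end Weights

section Roberts

variable {A I : Type*} [Fintype A] [Fintype I] [DecidableEq I]

/-- Roberts' theorem for choice rules respecting unanimous strict preferences: a choice rule on
all value profiles that is monotone in differences, agent by agent, maximizes a weighted sum. -/
theorem exists_weights_of_monotone (hA : 3 ≤ Fintype.card A) (G : (I → A → ℝ) → A)
    (hmono : ∀ (v : I → A → ℝ) (i : I) (w : A → ℝ),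
      (∀ b, b ≠ G v → v i (G v) - v i b < w (G v) - w b) → G (Function.update v i w) = G v)
    (hunan : ∀ (v : I → A → ℝ) (b : A), ¬ ∀ i, v i (G v) < v i b) :
    ∃ k : I → ℝ, (∀ i, 0 ≤ k i) ∧ ∑ i, k i = 1 ∧
      ∀ (v : I → A → ℝ) (b : A), ∑ i, k i * v i b ≤ ∑ i, k i * v i (G v) := by
  classical
  have hmono' : ∀ (v v' : I → A → ℝ),
      (∀ i b, b ≠ G v → v i (G v) - v i b < v' i (G v) - v' i b) → G v' = G v := by
    intro v v' h
    have key : ∀ s : Finset I, G (s.piecewise v' v) = G v := by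
      intro s
      induction s using Finset.induction_on with
      | empty => simp
      | insert j s hj ih =>
        rw [Finset.piecewise_insert, hmono, ih]
        intro b hb
        rw [ih] at hb ⊢
        rw [Finset.piecewise_eq_of_notMem _ _ _ hj]
        exact h j b hb
    simpa using key Finset.univ
  have hcross : ∀ (v w : I → A → ℝ) (b : A),
      (∀ i, v i (G v) - v i b < w i (G v) - w i b) → G w = b → b = G v := by
    intro v w b h hw
    by_contra hne
    set a := G v with ha
    have bound : ∀ i, ∃ B : ℝ, ∀ d, v i a - v i d ≤ B ∧ w i b - w i d ≤ B := by
      intro i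
      obtain ⟨B₁, h₁⟩ := (Set.finite_range fun d => v i a - v i d).bddAbove
      obtain ⟨B₂, h₂⟩ := (Set.finite_range fun d => w i b - w i d).bddAbove
      exact ⟨max B₁ B₂, fun d => ⟨le_max_of_le_left (h₁ ⟨d, rfl⟩),
        le_max_of_le_right (h₂ ⟨d, rfl⟩)⟩⟩
    choose B hB using bound
    let m : I → ℝ := fun i => ((v i a - v i b) + (w i a - w i b)) / 2
    let z : I → A → ℝ := fun i d =>
      if d = a then m i else if d = b then 0 else min (m i) 0 - B i - 1
    have hza : G z = a := by
      refine hmono' v z fun i d hd => ?_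
      have := h i
      have hBd := (hB i d).1
      have hmin := min_le_left (m i) 0
      by_cases hdb : d = b
      · subst hdb
        simp only [z, hne, ← ha, if_true, if_false, m]
        linarith
      · rw [← ha] at hd ⊢
        simp only [z, hdb, hd, if_true, if_false]
        linarith
    have hzb : G z = b := by
      rw [← hw]
      refine hmono' w z fun i d hd => ?_
      rw [hw] at hd ⊢
      have := h i
      have hBd := (hB i d).2
      have hmin := min_le_right (m i) 0
      by_cases hda : d = a
      · subst hda
        simp only [z, hne, if_true, if_false, m]
        linarith
      · simp only [z, hda, hd, hne, if_true, if_false]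
        linarith
    exact hne (hzb.symm.trans hza)
  -- The profile at which `a` is worth `α`, `b` is worth zero and the rest is worse than both.
  let duel : A → A → (I → ℝ) → I → A → ℝ := fun a b α i d =>
    if d = a then α i else if d = b then 0 else min (α i) 0 - 1
  let W : A → A → (I → ℝ) → Prop := fun a b α => G (duel a b α) = a
  have duel_left : ∀ a b α i, duel a b α i a = α i := fun a b α i => by simp [duel]
  have duel_right : ∀ a b α i, a ≠ b → duel a b α i b = 0 := fun a b α i h => by
    simp [duel, h.symm]
  have duel_cases : ∀ a b α, a ≠ b → G (duel a b α) = a ∨ G (duel a b α) = b := by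
    intro a b α _
    by_contra! hcon
    refine hunan (duel a b α) a fun i => ?_
    rw [duel_left]
    simp only [duel, hcon.1, hcon.2, if_false]
    linarith [min_le_left (α i) 0]
  have W_of_choice : ∀ v b β, b ≠ G v → (∀ i, v i (G v) - v i b < β i) → W (G v) b β := by
    intro v b β hb h
    rcases duel_cases (G v) b β hb.symm with h' | h'
    · exact h'
    · refine absurd (hcross v (duel (G v) b β) b (fun i => ?_) h') hb
      rw [duel_left, duel_right _ _ _ _ hb.symm, sub_zero]
      exact h i
  have W_mono : ∀ a b α β, a ≠ b → W a b α → (∀ i, α i < β i) → W a b β := by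
    intro a b α β hab h hlt
    have h' := W_of_choice (duel a b α) b β
    rw [show G (duel a b α) = a from h] at h'
    refine h' hab.symm fun i => ?_
    rw [duel_left, duel_right _ _ _ _ hab, sub_zero]
    exact hlt i
  have W_total : ∀ a b α β, a ≠ b → ¬ W a b α → (∀ i, -α i < β i) → W b a β := by
    intro a b α β hab h hlt
    have hb : G (duel a b α) = b := (duel_cases a b α hab).resolve_left h
    have h' := W_of_choice (duel a b α) a β
    rw [hb] at h'
    refine h' hab fun i => ?_
    rw [duel_left, duel_right _ _ _ _ hab, zero_sub]
    exact hlt i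
  have W_pos : ∀ a b α, a ≠ b → (∀ i, 0 < α i) → W a b α := by
    intro a b α hab h
    refine (duel_cases a b α hab).resolve_right fun hb => hunan (duel a b α) a fun i => ?_
    rw [hb, duel_left, duel_right _ _ _ _ hab]
    exact h i
  have W_not_neg : ∀ a b α, a ≠ b → (∀ i, α i < 0) → ¬ W a b α := by
    intro a b α hab h hW
    refine hunan (duel a b α) b fun i => ?_
    rw [show G (duel a b α) = a from hW, duel_left, duel_right _ _ _ _ hab]
    exact h i
  have W_trans : ∀ a b c α β γ, a ≠ b → b ≠ c → a ≠ c → W a b α → W b c β →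
      (∀ i, α i + β i < γ i) → W a c γ := by
    intro a b c α β γ hab hbc hac h₁ h₂ hlt
    let ε : I → ℝ := fun i => (γ i - α i - β i) / 3
    have hε : ∀ i, 0 < ε i := fun i => by
      have := hlt i
      simp only [ε]
      linarith
    let z : I → A → ℝ := fun i d =>
      if d = a then α i + ε i + (β i + ε i) else if d = b then β i + ε i else
        if d = c then 0 else α i + ε i + (β i + ε i) - 1
    have za : ∀ i, z i a = α i + ε i + (β i + ε i) := fun i => by simp [z]
    have zb : ∀ i, z i b = β i + ε i := fun i => by simp [z, hab.symm]
    have zc : ∀ i, z i c = 0 := fun i => by simp [z, hac.symm, hbc.symm]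
    have hGb : G z ≠ b := by
      intro hb
      refine hab (Eq.symm ?_)
      refine (hcross (duel a b α) z b (fun i => ?_) hb).trans h₁
      rw [show G (duel a b α) = a from h₁, duel_left, duel_right _ _ _ _ hab, za, zb]
      linarith [hε i]
    have hGc : G z ≠ c := by
      intro hc
      refine hbc (Eq.symm ?_)
      refine (hcross (duel b c β) z c (fun i => ?_) hc).trans h₂
      rw [show G (duel b c β) = b from h₂, duel_left, duel_right _ _ _ _ hbc, zb, zc]
      linarith [hε i]
    have hGa : G z = a := by
      by_contra hGa
      refine hunan z a fun i => ?_
      rw [za]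
      simp only [z, hGa, hGb, hGc, if_false]
      linarith
    have h := W_of_choice z c γ
    rw [hGa] at h
    refine h hac.symm fun i => ?_
    rw [za, zc]
    have := hlt i
    simp only [ε]
    linarith
  have third : ∀ a b : A, ∃ c, c ≠ a ∧ c ≠ b := by
    intro a b
    obtain ⟨c, hc⟩ : ∃ c, c ∉ ({a, b} : Finset A) := by
      by_contra! hcon
      have h := Finset.card_le_card (fun c _ => hcon c : (Finset.univ : Finset A) ⊆ {a, b})
      rw [Finset.card_univ] at h
      have := Finset.card_le_two (a := a) (b := b)
      omega
    simp only [Finset.mem_insert, Finset.mem_singleton, not_or] at hc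
    exact ⟨c, hc⟩
  have W_right : ∀ a b c α γ, a ≠ b → a ≠ c → W a b α → (∀ i, α i < γ i) → W a c γ := by
    intro a b c α γ hab hac h hlt
    by_cases hbc : b = c
    · subst hbc
      exact W_mono _ _ _ _ hab h hlt
    · refine W_trans a b c α (fun i => (γ i - α i) / 2) γ hab hbc hac h
        (W_pos _ _ _ hbc fun i => ?_) fun i => ?_
      · linarith [hlt i]
      · linarith [hlt i]
  have W_left : ∀ a b c α γ, a ≠ b → c ≠ b → W a b α → (∀ i, α i < γ i) → W c b γ := by
    intro a b c α γ hab hcb h hlt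
    by_cases hac : c = a
    · subst hac
      exact W_mono _ _ _ _ hab h hlt
    · refine W_trans c a b (fun i => (γ i - α i) / 2) α γ hac hab hcb
        (W_pos _ _ _ hac fun i => ?_) h fun i => ?_
      · linarith [hlt i]
      · linarith [hlt i]
  have W_neutral : ∀ a b c d α (ε : ℝ), a ≠ b → c ≠ d → 0 < ε → W a b α →
      W c d fun i => α i + ε := by
    intro a b c d α ε hab hcd hε h
    obtain ⟨e, hea, hed⟩ := third a d
    have h₁ := W_right a b e α (fun i => α i + ε / 4) hab hea.symm h fun i => by linarith
    by_cases hce : c = e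
    · obtain ⟨f, hfe, hfd⟩ := third e d
      have h₂ := W_left a e f _ (fun i => α i + ε / 2) hea.symm hfe h₁ fun i => by linarith
      have h₃ := W_right f e d _ (fun i => α i + ε * (3 / 4)) hfe hfd h₂ fun i => by linarith
      exact W_left f d c _ _ hfd hcd h₃ fun i => by linarith
    · have h₂ := W_left a e c _ (fun i => α i + ε / 2) hea.symm hce h₁ fun i => by linarith
      exact W_right c e d _ _ hce hcd h₂ fun i => by linarith
  let K : Set (I → ℝ) := {α | ∃ ε : ℝ, 0 < ε ∧ ∀ a b, a ≠ b → W a b fun i => α i - ε}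
  have K_of_W : ∀ a b α (ε : ℝ), a ≠ b → 0 < ε → W a b α → (fun i => α i + ε) ∈ K := by
    intro a b α ε hab hε h
    refine ⟨ε / 2, by linarith, fun c d hcd => ?_⟩
    have h' := W_neutral a b c d α (ε / 2) hab hcd (by linarith) h
    convert h' using 2
    ring
  obtain ⟨a₀, b₀, c₀, hab, hac, hbc⟩ := Fintype.two_lt_card_iff.1 (show 2 < Fintype.card A from hA)
  obtain ⟨k, hk, hk1, hkK⟩ := exists_weights_of_total_cone K (by
      rintro α ⟨ε, hε, hα⟩ β ⟨δ, hδ, hβ⟩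
      have h := W_trans a₀ b₀ c₀ _ _ (fun i => α i + β i - (ε + δ) / 2) hab hbc hac
        (hα _ _ hab) (hβ _ _ hbc) fun i => by linarith
      have h' := K_of_W _ _ _ ((ε + δ) / 2) hac (by linarith) h
      convert h' using 1
      ext i
      simp) (by
      intro α hα
      by_cases hI : Nonempty I
      · let ε := Finset.univ.inf' Finset.univ_nonempty α
        have hε : 0 < ε := (Finset.lt_inf'_iff _).2 fun i _ => hα i
        refine ⟨ε / 2, by linarith, fun a b hab => W_pos _ _ _ hab fun i => ?_⟩
        have : ε ≤ α i := Finset.inf'_le _ (Finset.mem_univ i)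
        linarith
      · exact absurd (fun i => absurd ⟨i⟩ hI) (hunan (fun _ _ => 0) a₀)) (by
      rintro ⟨ε, hε, h⟩
      refine W_not_neg a₀ b₀ _ hab (fun i => ?_) (h _ _ hab)
      simpa using hε) (by
      intro α hα δ hδ
      by_contra hcon
      apply hα
      refine ⟨δ / 3, by linarith, fun a b hab => ?_⟩
      by_contra h
      have h' := W_total a b _ (fun i => -α i + δ * (2 / 3)) hab h fun i => by linarith
      refine hcon ?_
      have := K_of_W _ _ _ (δ / 3) hab.symm (by linarith) h'
      convert this using 1
      ext i
      ring)
  refine ⟨k, hk, hk1, fun v b => ?_⟩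
  by_cases hb : b = G v
  · rw [hb]
  · refine le_of_forall_pos_le_add fun ε hε => ?_
    have h := hkK _ (K_of_W _ _ _ (ε / 2) (Ne.symm hb) (by linarith)
      (W_of_choice v b (fun i => v i (G v) - v i b + ε / 2) hb fun i => by linarith))
    have e : ∑ i, k i * (v i (G v) - v i b + ε / 2 + ε / 2)
        = ∑ i, k i * v i (G v) - ∑ i, k i * v i b + ε := by
      calc ∑ i, k i * (v i (G v) - v i b + ε / 2 + ε / 2)
          = ∑ i, (k i * v i (G v) - k i * v i b + k i * ε) :=
            Finset.sum_congr rfl fun i _ => by ring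
        _ = _ := by
            rw [Finset.sum_add_distrib, Finset.sum_sub_distrib, ← Finset.sum_mul, hk1, one_mul]
    rw [e] at h
    linarith

end Roberts

section Types

variable {A : Type*} [Fintype A] [Nonempty A] {u : Util A}

theorem minVal_le (u : Util A) (a : A) : minVal u ≤ u a 0 :=
  Finset.inf'_le _ (Finset.mem_univ a)

theorem exists_eq_minVal (u : Util A) : ∃ c, u c 0 = minVal u := by
  obtain ⟨c, -, hc⟩ := Finset.exists_mem_eq_inf' Finset.univ_nonempty (fun a => u a 0)
  exact ⟨c, hc.symm⟩

theorem apply_wtp (h₁ : S1 u) (h₂ : S2 u) (a : A) : u a (wtp u a) = minVal u := by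
  obtain ⟨z, hz⟩ := h₂ a
  obtain ⟨y, hy⟩ := mem_range_of_exists_le_of_exists_ge (h₁ a).1 ⟨z, hz.le⟩ ⟨0, minVal_le u a⟩
  have hset : {z : ℝ | u a z ≤ minVal u} = Set.Ici y := by
    ext w
    rw [← hy]
    exact (h₁ a).2.le_iff_ge
  rw [wtp, hset, csInf_Ici, hy]

theorem minVal_le_apply_iff (h₁ : S1 u) (h₂ : S2 u) {a : A} {z : ℝ} :
    minVal u ≤ u a z ↔ z ≤ wtp u a := by
  rw [← apply_wtp h₁ h₂ a]
  exact (h₁ a).2.le_iff_ge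

theorem minVal_lt_apply_iff (h₁ : S1 u) (h₂ : S2 u) {a : A} {z : ℝ} :
    minVal u < u a z ↔ z < wtp u a := by
  rw [← apply_wtp h₁ h₂ a]
  exact (h₁ a).2.lt_iff_gt

theorem wtp_nonneg (h₁ : S1 u) (h₂ : S2 u) (a : A) : 0 ≤ wtp u a :=
  (minVal_le_apply_iff h₁ h₂).1 (minVal_le u a)

/-- For a parallel type, outcomes leaving the same surplus are equally good. -/
theorem IsParallel.apply_eq_apply (hu : IsParallel u) {a b : A} {y z : ℝ} (hy : 0 ≤ y)
    (hya : y ≤ wtp u a) (hz : 0 ≤ z) (hzb : z ≤ wtp u b)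
    (h : wtp u a - y = wtp u b - z) : u a y = u b z := by
  rcases le_total (u b 0) (u a 0) with hv | hv
  · rw [← hu.2.2 a b hv z hz hzb]
    congr 1
    linarith
  · rw [← hu.2.2 b a hv y hy hya]
    congr 1
    linarith

/-- For a parallel type, weakly better acceptable outcomes leave weakly more surplus. -/
theorem IsParallel.surplus_le (hu : IsParallel u) {a b : A} {y z : ℝ}
    (hya : y ≤ wtp u a) (hy : 0 ≤ y) (hz : 0 ≤ z) (h : u b z ≤ u a y) :
    wtp u b - z ≤ wtp u a - y := by
  by_contra! hlt
  have e : u b (wtp u b - wtp u a + y) = u a y :=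
    hu.apply_eq_apply (by linarith) (by linarith) hy hya (by ring)
  have : u b (wtp u b - wtp u a + y) < u b z := (hu.1 b).2 (by linarith)
  linarith

end Types

theorem exists_pos_lt_apply_add {f : ℝ → ℝ} (hf : Continuous f) {c y : ℝ}
    (h : c < f y) : ∃ ε, 0 < ε ∧ c < f (y + ε) := by
  obtain ⟨ε, hε, hball⟩ := Metric.mem_nhds_iff.1 ((isOpen_lt continuous_const hf).mem_nhds h)
  refine ⟨ε / 2, by linarith, hball ?_⟩
  rw [Metric.mem_ball, Real.dist_eq, add_sub_cancel_left, abs_of_pos (by linarith)]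
  linarith

theorem update_section {A I : Type*} [DecidableEq I] (τ : I → (A → ℝ) → Util A) (v : I → A → ℝ)
    (i : I) (w : A → ℝ) :
    Function.update (fun j => τ j (v j)) i (τ i w) = fun j => τ j (Function.update v i w j) := by
  ext1 j
  rcases eq_or_ne j i with rfl | hj <;> simp [*]

section Mechanisms

variable {A I : Type*} [Fintype A] [Nonempty A]
  {U : I → Set (Util A)} {τ : I → (A → ℝ) → Util A}
  {x : (I → Util A) → A} {t : (I → Util A) → I → ℝ}

/-- A choice of parallel types in the domain, one for each vector of values; the willingness to
pay of the chosen type is the value vector shifted to have minimum zero. -/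
def IsParallelSection (U : I → Set (Util A)) (τ : I → (A → ℝ) → Util A) : Prop :=
  ∀ i v, τ i v ∈ U i ∧ IsParallel (τ i v) ∧
    ∀ a, wtp (τ i v) a = v a - Finset.univ.inf' Finset.univ_nonempty v

theorem exists_isParallelSection
    (h : ∀ i, ∃ D : Set (Util A), D ⊆ U i ∧ (∀ u ∈ D, IsParallel u) ∧ UnrestrictedWTP D) :
    ∃ τ, IsParallelSection U τ := by
  have key : ∀ (i : I) (v : A → ℝ), ∃ u, u ∈ U i ∧ IsParallel u ∧
      ∀ a, wtp u a = v a - Finset.univ.inf' Finset.univ_nonempty v := by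
    intro i v
    obtain ⟨D, hDU, hD, hw⟩ := h i
    obtain ⟨c, -, hc⟩ := Finset.exists_mem_eq_inf' Finset.univ_nonempty v
    obtain ⟨u, hu, hwu⟩ := hw (fun a => v a - Finset.univ.inf' Finset.univ_nonempty v)
      (fun a => sub_nonneg.2 (Finset.inf'_le _ (Finset.mem_univ a))) ⟨c, by rw [hc, sub_self]⟩
    exact ⟨u, hDU hu, hD u hu, hwu⟩
  choose τ hτ using key
  exact ⟨τ, hτ⟩

theorem IsParallelSection.wtp_eq (hτ : IsParallelSection U τ) (i : I) {v : A → ℝ}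
    (hv : ∀ a, 0 ≤ v a) {c : A} (hc : v c = 0) (a : A) : wtp (τ i v) a = v a := by
  have h : Finset.univ.inf' Finset.univ_nonempty v = 0 :=
    le_antisymm (hc ▸ Finset.inf'_le _ (Finset.mem_univ c)) (Finset.le_inf' _ _ fun b _ => hv b)
  rw [(hτ i v).2.2, h, sub_zero]

theorem IsParallelSection.wtp_sub_wtp (hτ : IsParallelSection U τ) (i : I) (v : A → ℝ)
    (a b : A) : wtp (τ i v) a - wtp (τ i v) b = v a - v b := by
  rw [(hτ i v).2.2, (hτ i v).2.2]
  ring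

variable [DecidableEq I]

/-- The basic requirements on a domain and a mechanism, apart from efficiency. -/
structure IsFeasible (U : I → Set (Util A)) (x : (I → Util A) → A)
    (t : (I → Util A) → I → ℝ) : Prop where
  regular : ∀ i, ∀ u ∈ U i, S1 u ∧ S2 u
  dsic : DSIC U x t
  ir : IR U x t
  noSubsidy : NoSubsidy U t

theorem IsParallelSection.update_mem (hτ : IsParallelSection U τ) {u : I → Util A}
    (hu : ∀ j, u j ∈ U j) (i : I) (v : A → ℝ) (j : I) :
    Function.update u i (τ i v) j ∈ U j := by
  rcases eq_or_ne j i with rfl | hj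
  · simpa using (hτ j v).1
  · simpa [hj] using hu j

namespace IsFeasible

theorem minVal_le_utility (hm : IsFeasible U x t)
    {u : I → Util A} (hu : ∀ j, u j ∈ U j) (i : I) :
    minVal (u i) ≤ u i (x u) (t u i) := by
  simpa using hm.ir u hu i (u i) (hu i)

theorem payment_le_wtp (hm : IsFeasible U x t)
    {u : I → Util A} (hu : ∀ j, u j ∈ U j) (i : I) :
    t u i ≤ wtp (u i) (x u) :=
  (minVal_le_apply_iff (hm.regular i _ (hu i)).1 (hm.regular i _ (hu i)).2).1
    (hm.minVal_le_utility hu i)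

/-- Choices are monotone in the value differences of each agent with a parallel type. -/
theorem value_sub_le (hm : IsFeasible U x t)
    (hτ : IsParallelSection U τ) {u : I → Util A} (hu : ∀ j, u j ∈ U j) (i : I)
    (v w : A → ℝ) :
    w (x (Function.update u i (τ i v))) - w (x (Function.update u i (τ i w)))
      ≤ v (x (Function.update u i (τ i v))) - v (x (Function.update u i (τ i w))) := by
  have surplus : ∀ v w : A → ℝ,
      wtp (τ i v) (x (Function.update u i (τ i w))) - t (Function.update u i (τ i w)) i ≤
        wtp (τ i v) (x (Function.update u i (τ i v))) - t (Function.update u i (τ i v)) i := by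
    intro v w
    have hv := hτ.update_mem hu i v
    have hw := hτ.update_mem hu i w
    have h := hm.dsic _ hw i _ (hτ i v).1
    rw [Function.update_idem] at h
    refine (hτ i v).2.1.surplus_le ?_ (hm.noSubsidy _ hv i) (hm.noSubsidy _ hw i) h
    simpa using hm.payment_le_wtp hv i
  have h₁ := surplus v w
  have h₂ := surplus w v
  have e₁ := hτ.wtp_sub_wtp i v (x (Function.update u i (τ i v))) (x (Function.update u i (τ i w)))
  have e₂ := hτ.wtp_sub_wtp i w (x (Function.update u i (τ i v))) (x (Function.update u i (τ i w)))
  linarith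

/-- If an agent who values only `a` obtains it whenever this value exceeds `q`, then `a` is
available to the agent at price `q`. -/
theorem le_utility_of_obtains (hm : IsFeasible U x t)
    [DecidableEq A] (hτ : IsParallelSection U τ) (hA : 2 ≤ Fintype.card A)
    {u : I → Util A} (hu : ∀ j, u j ∈ U j) (i : I) (a : A) {q : ℝ} (hq : 0 ≤ q)
    (h : ∀ M, q < M → x (Function.update u i (τ i (Pi.single a M))) = a) :
    u i a q ≤ u i (x u) (t u i) := by
  have : Nontrivial A := Fintype.one_lt_card_iff_nontrivial.1 hA
  obtain ⟨c, hc⟩ := exists_ne a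
  have key : ∀ M ∈ Set.Ioi q, u i a M ≤ u i (x u) (t u i) := by
    intro M hM
    have hw := hτ.update_mem hu i (Pi.single a M)
    have hd := hm.dsic _ hw i _ (hu i)
    rw [Function.update_idem, Function.update_eq_self, h M hM] at hd
    have hp := hm.payment_le_wtp hw i
    rw [h M hM, Function.update_self, hτ.wtp_eq i (c := c), Pi.single_eq_same] at hp
    · exact (((hm.regular i _ (hu i)).1 a).2.antitone hp).trans hd
    · intro b
      rw [Pi.single_apply]
      split_ifs
      exacts [hq.trans (le_of_lt hM), le_rfl]
    · simp [hc]
  have hcont : Filter.Tendsto (u i a) (nhdsWithin q (Set.Ioi q)) (nhds (u i a q)) :=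
    (((hm.regular i _ (hu i)).1 a).1.tendsto q).mono_left nhdsWithin_le_nhds
  exact le_of_tendsto hcont (Filter.eventually_of_mem self_mem_nhdsWithin key)

/-- If an agent who values only `a` never obtains it when this value is below `q`, then the agent
pays at least `q` for `a`. -/
theorem le_payment_of_not_obtains (hm : IsFeasible U x t)
    [DecidableEq A] (hτ : IsParallelSection U τ)
    (hA : 2 ≤ Fintype.card A) {u : I → Util A} (hu : ∀ j, u j ∈ U j) (i : I) {q : ℝ}
    (h : ∀ M, 0 < M → M < q → x (Function.update u i (τ i (Pi.single (x u) M))) ≠ x u) :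
    q ≤ t u i := by
  have : Nontrivial A := Fintype.one_lt_card_iff_nontrivial.1 hA
  obtain ⟨c, hc⟩ := exists_ne (x u)
  by_contra! hlt
  obtain ⟨M, htM, hMq⟩ := exists_between hlt
  have ht := hm.noSubsidy u hu i
  have hb := h M (ht.trans_lt htM) hMq
  have hw := hτ.update_mem hu i (Pi.single (x u) M)
  have hd := hm.dsic u hu i _ (hτ i (Pi.single (x u) M)).1
  have hwtp : ∀ b, wtp (τ i (Pi.single (x u) M)) b = (Pi.single (x u) M : A → ℝ) b := by
    refine hτ.wtp_eq i (c := c) (fun b => ?_) (by simp [hc])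
    rw [Pi.single_apply]
    split_ifs
    exacts [(ht.trans_lt htM).le, le_rfl]
  obtain ⟨h₁, h₂, -⟩ := (hτ i (Pi.single (x u) M)).2.1
  have hgain : minVal (τ i (Pi.single (x u) M)) < τ i (Pi.single (x u) M) (x u) (t u i) := by
    rw [minVal_lt_apply_iff h₁ h₂, hwtp, Pi.single_eq_same]
    exact htM
  have hlow := (minVal_lt_apply_iff h₁ h₂).1 (hgain.trans_le hd)
  rw [hwtp, Pi.single_eq_of_ne hb] at hlow
  exact absurd (hm.noSubsidy _ hw i) (not_le.2 hlow)

/-- An agent who decides over parallel types decides over all types, and never pays. -/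
theorem dictator_of_parallel (hm : IsFeasible U x t)
    [Fintype I] [DecidableEq A] (hτ : IsParallelSection U τ)
    (hA : 2 ≤ Fintype.card A) (i : I)
    (h : ∀ (v : I → A → ℝ) (a : A) (M : ℝ), 0 < M → v i = Pi.single a M →
      x (fun j => τ j (v j)) = a) :
    ∀ u : I → Util A, (∀ j, u j ∈ U j) → (∀ a, u i a 0 ≤ u i (x u) 0) ∧ t u i = 0 := by
  have key : ∀ s : Finset I, i ∉ s → ∀ (u : I → Util A) (a : A) (M : ℝ), (∀ j, u j ∈ U j) →
      (∀ j ∉ s, ∃ v, u j = τ j v) → 0 < M → u i = τ i (Pi.single a M) → x u = a := by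
    intro s
    induction s using Finset.induction_on with
    | empty =>
      intro _ u a M _ hs hM hui
      have hs' : ∀ j, ∃ v, u j = τ j v ∧ (j = i → v = Pi.single a M) := by
        intro j
        by_cases hj : j = i
        · subst hj
          exact ⟨_, hui, fun _ => rfl⟩
        · obtain ⟨v, hv⟩ := hs j (Finset.notMem_empty j)
          exact ⟨v, hv, fun h => absurd h hj⟩
      choose v hv using hs'
      rw [show u = fun j => τ j (v j) from funext fun j => (hv j).1]
      exact h v a M hM ((hv i).2 rfl)
    | insert j s hj ih =>
      intro hi u a M hu hs hM hui
      rw [Finset.mem_insert, not_or] at hi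
      by_contra hne
      have hT := hm.noSubsidy u hu j
      set w := Function.update u j (τ j (Pi.single (x u) (t u j + 1))) with hwdef
      have hw := hτ.update_mem hu j (Pi.single (x u) (t u j + 1))
      have hxw : x w = a := by
        refine ih hi.2 w a M hw (fun l hl => ?_) hM ?_
        · by_cases hlj : l = j
          · subst hlj
            exact ⟨_, Function.update_self _ _ _⟩
          · obtain ⟨v, hv⟩ := hs l (by simp [hlj, hl])
            exact ⟨v, by rw [hwdef, Function.update_of_ne hlj, hv]⟩
        · rw [hwdef, Function.update_of_ne hi.1, hui]
      have hwtp : ∀ b, wtp (τ j (Pi.single (x u) (t u j + 1))) b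
          = (Pi.single (x u) (t u j + 1) : A → ℝ) b := by
        refine hτ.wtp_eq j (c := a) (fun b => ?_) (by simp [Ne.symm hne])
        rw [Pi.single_apply]
        split_ifs
        exacts [by linarith, le_rfl]
      obtain ⟨h₁, h₂, -⟩ := (hτ j (Pi.single (x u) (t u j + 1))).2.1
      have hd := hm.dsic u hu j _ (hτ j (Pi.single (x u) (t u j + 1))).1
      have hgain : minVal (τ j (Pi.single (x u) (t u j + 1)))
          < τ j (Pi.single (x u) (t u j + 1)) (x u) (t u j) := by
        rw [minVal_lt_apply_iff h₁ h₂, hwtp, Pi.single_eq_same]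
        linarith
      have hlow := (minVal_lt_apply_iff h₁ h₂).1 (hgain.trans_le hd)
      rw [← hwdef, hwtp, hxw, Pi.single_eq_of_ne (Ne.symm hne)] at hlow
      exact absurd (hm.noSubsidy _ hw j) (not_le.2 hlow)
  intro u hu
  have havail : ∀ a, u i a 0 ≤ u i (x u) (t u i) := fun a =>
    hm.le_utility_of_obtains hτ hA hu i a le_rfl fun M hM =>
      key (Finset.univ.erase i) (Finset.notMem_erase i _) _ a M (hτ.update_mem hu i _)
        (fun j hj => by
          have : j = i := by simpa using hj
          subst this
          exact ⟨_, Function.update_self _ _ _⟩) hM (Function.update_self _ _ _)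
  have ht : t u i = 0 :=
    le_antisymm (((hm.regular i _ (hu i)).1 (x u)).2.le_iff_ge.1 (havail (x u)))
      (hm.noSubsidy u hu i)
  exact ⟨fun a => ht ▸ havail a, ht⟩


/-- On parallel types a Pareto efficient mechanism maximizes a weighted sum of values. -/
theorem exists_weights (hm : IsFeasible U x t)
    [Fintype I] [Nonempty I] (hτ : IsParallelSection U τ)
    (hA : 3 ≤ Fintype.card A) (hPE : ParetoEfficient U x t) :
    ∃ k : I → ℝ, (∀ i, 0 ≤ k i) ∧ ∑ i, k i = 1 ∧ ∀ (v : I → A → ℝ) (b : A),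
      ∑ i, k i * v i b ≤ ∑ i, k i * v i (x fun j => τ j (v j)) := by
  have hmem : ∀ (v : I → A → ℝ) j, τ j (v j) ∈ U j := fun v j => (hτ j (v j)).1
  refine exists_weights_of_monotone hA (fun v => x fun j => τ j (v j)) ?_ ?_
  · intro v i w h
    by_contra hne
    have h₁ := hm.value_sub_le hτ (hmem v) i (v i) w
    rw [update_section, update_section, Function.update_eq_self] at h₁
    exact absurd h₁ (not_le.2 (h _ hne))
  · intro v b h
    have hlt : ∀ i, τ i (v i) (x fun j => τ j (v j)) (t (fun j => τ j (v j)) i)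
        < τ i (v i) b (t (fun j => τ j (v j)) i) := by
      intro i
      have h0 := hm.noSubsidy _ (hmem v) i
      by_contra! hle
      have hs := (hτ i (v i)).2.1.surplus_le (hm.payment_le_wtp (hmem v) i) h0 h0 hle
      have e := hτ.wtp_sub_wtp i (v i) b (x fun j => τ j (v j))
      linarith [h i]
    obtain ⟨i₀⟩ := ‹Nonempty I›
    refine hPE _ (hmem v) ⟨b, t (fun j => τ j (v j)), ?_, fun i => (hlt i).le, ⟨i₀, hlt i₀⟩,
      le_rfl⟩
    rintro rfl
    exact lt_irrefl _ (h i₀)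

/-- If two agents matter to a Pareto efficient mechanism, then all agents do. -/
theorem weight_ne_zero (hm : IsFeasible U x t)
    [Fintype I] (hτ : IsParallelSection U τ) (hA : 3 ≤ Fintype.card A)
    (hPE : ParetoEfficient U x t) {k : I → ℝ}
    (hk : ∀ (v : I → A → ℝ) (b : A),
      ∑ i, k i * v i b ≤ ∑ i, k i * v i (x fun j => τ j (v j)))
    {i₁ i₂ : I} (hne : i₁ ≠ i₂) (h₁ : 0 < k i₁) (h₂ : 0 < k i₂) (j : I) : k j ≠ 0 := by
  classical
  intro hj
  have hj₁ : j ≠ i₁ := by rintro rfl; exact h₁.ne' hj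
  have hj₂ : j ≠ i₂ := by rintro rfl; exact h₂.ne' hj
  obtain ⟨a, b, c, hab, hac, hbc⟩ := Fintype.two_lt_card_iff.1 (show 2 < Fintype.card A from hA)
  obtain ⟨q, hq⟩ : ∃ q, q = k i₂ / k i₁ := ⟨_, rfl⟩
  have hq0 : 0 < q := hq ▸ div_pos h₂ h₁
  have hkq : k i₁ * q = k i₂ := by
    rw [hq]
    field_simp
  let f : A → ℝ := fun d => if d = a then 2 * q else if d = b then q else 0
  let v : I → A → ℝ := fun l => if l = i₁ then f else if l = i₂ then Pi.single c 1 else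
    if l = j then Pi.single b (2 * q) else 0
  have hv₁ : v i₁ = f := by simp [v]
  have hv₂ : v i₂ = Pi.single c 1 := by simp [v, hne.symm]
  have hvj : v j = Pi.single b (2 * q) := by simp [v, hj₁, hj₂]
  have hv0 : ∀ l, l ≠ i₁ → l ≠ i₂ → l ≠ j → v l = 0 := fun l h₁ h₂ h₃ => by simp [v, h₁, h₂, h₃]
  have hfa : f a = 2 * q := by simp [f]
  have hfb : f b = q := by simp [f, hab.symm]
  have hfc : f c = 0 := by simp [f, hac.symm, hbc.symm]
  have hf0 : ∀ d, 0 ≤ f d := fun d => by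
    simp only [f]
    split_ifs <;> linarith
  have hsum : ∀ w d, ∑ l, k l * Function.update v i₁ w l d
      = k i₁ * w d + k i₂ * (Pi.single c 1 : A → ℝ) d := by
    intro w d
    rw [Fintype.sum_eq_add i₁ i₂ hne, Function.update_self, Function.update_of_ne hne.symm, hv₂]
    rintro l ⟨hl₁, hl₂⟩
    rw [Function.update_of_ne hl₁]
    rcases eq_or_ne l j with rfl | hlj
    · rw [hj, zero_mul]
    · rw [hv0 l hl₁ hl₂ hlj, Pi.zero_apply, mul_zero]
  have hu : ∀ l, τ l (v l) ∈ U l := fun l => (hτ l (v l)).1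
  have hxa : x (fun l => τ l (v l)) = a := by
    by_contra hxa
    have h := hk v a
    have e := hsum (v i₁)
    rw [Function.update_eq_self, hv₁] at e
    rw [e, e, hfa, Pi.single_eq_of_ne hac] at h
    generalize x (fun l => τ l (v l)) = d at h hxa
    simp only [f, hxa, if_false, Pi.single_apply] at h
    split_ifs at h with hdb hdc
    · exact hbc (hdb.symm.trans hdc)
    · linarith
    · linarith
    · linarith
  have hval0 : ∀ l d, 0 ≤ v l d := by
    intro l d
    simp only [v]
    split_ifs
    · exact hf0 d
    · rw [Pi.single_apply]
      split_ifs <;> norm_num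
    · rw [Pi.single_apply]
      split_ifs <;> linarith
    · exact le_rfl
  have hwtp : ∀ l d, wtp (τ l (v l)) d = v l d := by
    intro l d
    by_cases hl : l = i₁
    · exact hτ.wtp_eq l (hval0 l) (c := c) (by rw [hl, hv₁, hfc]) d
    · refine hτ.wtp_eq l (hval0 l) (c := a) ?_ d
      simp only [v, hl, if_false]
      split_ifs <;> simp [hac, hab]
  have hpay : ∀ l, t (fun l => τ l (v l)) l ≤ v l a := by
    intro l
    have h := hm.payment_le_wtp hu l
    rwa [hxa, hwtp] at h
  have hns := hm.noSubsidy _ hu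
  have ht₁ : q ≤ t (fun l => τ l (v l)) i₁ := by
    refine hm.le_payment_of_not_obtains hτ (by omega) hu i₁ fun M hM hMq => ?_
    rw [hxa, update_section]
    intro hx
    have h := hk (Function.update v i₁ (Pi.single a M)) c
    rw [hx, hsum, hsum, Pi.single_eq_same, Pi.single_eq_same, Pi.single_eq_of_ne hac,
      Pi.single_eq_of_ne hac.symm, ← hkq] at h
    nlinarith
  have htj : t (fun l => τ l (v l)) j = 0 := by
    refine le_antisymm ((hpay j).trans_eq ?_) (hns j)
    rw [hvj, Pi.single_eq_of_ne hab]
  let s : I → ℝ := fun l => if l = i₁ then t (fun l => τ l (v l)) i₁ - q else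
    if l = j then q else t (fun l => τ l (v l)) l
  have hs₁ : s i₁ = t (fun l => τ l (v l)) i₁ - q := by simp [s]
  have hsj : s j = q := by simp [s, hj₁]
  have hs0 : ∀ l, l ≠ i₁ → l ≠ j → s l = t (fun l => τ l (v l)) l := fun l h₁ h₂ => by
    simp [s, h₁, h₂]
  have hstrict : τ j (v j) a (t (fun l => τ l (v l)) j) < τ j (v j) b (s j) := by
    obtain ⟨hS₁, hS₂, -⟩ := (hτ j (v j)).2.1
    have h := apply_wtp hS₁ hS₂ a
    rw [hwtp, hvj, Pi.single_eq_of_ne hab, ← hvj] at h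
    rw [htj, hsj, h, minVal_lt_apply_iff hS₁ hS₂, hwtp, hvj, Pi.single_eq_same]
    linarith
  refine hPE _ hu ⟨b, s, ?_, ?_, ⟨j, ?_⟩, ?_⟩
  · rw [hxa]
    exact hab.symm
  · intro l
    rw [hxa]
    by_cases hl₁ : l = i₁
    · subst hl₁
      refine le_of_eq ((hτ l (v l)).2.1.apply_eq_apply (hns l) ?_ ?_ ?_ ?_)
      · rw [hwtp]
        exact hpay l
      · linarith
      · have := hpay l
        rw [hv₁, hfa] at this
        rw [hwtp, hs₁, hv₁, hfb]
        linarith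
      · rw [hwtp, hwtp, hs₁, hv₁, hfa, hfb]
        ring
    · by_cases hlj : l = j
      · subst hlj
        exact hstrict.le
      · have hlab : v l a = v l b := by
          by_cases hl₂ : l = i₂
          · rw [hl₂, hv₂, Pi.single_eq_of_ne hac, Pi.single_eq_of_ne hbc]
          · rw [hv0 l hl₁ hl₂ hlj, Pi.zero_apply, Pi.zero_apply]
        rw [hs0 l hl₁ hlj]
        refine le_of_eq ((hτ l (v l)).2.1.apply_eq_apply (hns l) ?_ (hns l) ?_ ?_)
        · rw [hwtp]
          exact hpay l
        · rw [hwtp, ← hlab]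
          exact hpay l
        · rw [hwtp, hwtp, hlab]
  · rw [hxa]
    exact hstrict
  · rw [← sub_nonneg, ← Finset.sum_sub_distrib, Fintype.sum_eq_add i₁ j hj₁.symm, hs₁, hsj, htj]
    · linarith
    · rintro l ⟨hl₁, hlj⟩
      rw [hs0 l hl₁ hlj, sub_self]

/-- If two agents matter to a mechanism maximizing a weighted sum of values over parallel types,
then these agents have parallel types only. -/
theorem isParallel_of_weights_pos (hm : IsFeasible U x t)
    [Fintype I] (hτ : IsParallelSection U τ)
    (hA : 3 ≤ Fintype.card A) {k : I → ℝ}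
    (hk : ∀ (v : I → A → ℝ) (b : A),
      ∑ i, k i * v i b ≤ ∑ i, k i * v i (x fun j => τ j (v j)))
    {i j : I} (hij : i ≠ j) (hi : 0 < k i) (hj : 0 < k j) {w : Util A} (hw : w ∈ U i) :
    IsParallel w := by
  classical
  obtain ⟨hS₁, hS₂⟩ := hm.regular i w hw
  -- Agent `j` reports values that confront agent `i` with the prices `π`.
  let r : (A → ℝ) → A → ℝ := fun π d => -(k i / k j) * π d
  let base : I → Util A := Function.update (fun l => τ l 0) i w
  let pr : (A → ℝ) → I → Util A := fun π => Function.update base j (τ j (r π))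
  have hbase : ∀ l, base l ∈ U l := by
    intro l
    rcases eq_or_ne l i with rfl | hl
    · simpa [base] using hw
    · simpa [base, hl] using (hτ l 0).1
  have hpr : ∀ π l, pr π l ∈ U l := fun π => hτ.update_mem hbase j (r π)
  have hpri : ∀ π, pr π i = w := fun π => by simp [pr, base, hij]
  have hpr_update : ∀ π s, Function.update (pr π) i (τ i s)
      = fun l => τ l (Function.update (Function.update (0 : I → A → ℝ) j (r π)) i s l) := by
    intro π s
    ext1 l
    by_cases hli : l = i
    · subst hli
      simp
    · by_cases hlj : l = j
      · subst hlj
        simp [pr, hli]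
      · simp [pr, base, hli, hlj]
  have hsum : ∀ π s d, ∑ l, k l * Function.update (Function.update (0 : I → A → ℝ) j (r π)) i s l d
      = k i * (s d - π d) := by
    intro π s d
    rw [Fintype.sum_eq_add i j hij, Function.update_self, Function.update_of_ne hij.symm,
      Function.update_self]
    · simp only [r]
      field_simp
      ring
    · rintro l ⟨hli, hlj⟩
      simp [hli, hlj]
  have hbest : ∀ π : A → ℝ, (∀ a, 0 ≤ π a) → (∃ c, π c = 0) → ∀ b,
      w b (π b) ≤ w (x (pr π)) (π (x (pr π))) := by
    rintro π hπ ⟨c, hc⟩ b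
    have hget : w b (π b) ≤ w (x (pr π)) (t (pr π) i) := by
      have h := hm.le_utility_of_obtains hτ (by omega) (hpr π) i b (hπ b) fun M hM => by
        rw [hpr_update]
        by_contra hne
        have h := hk (Function.update (Function.update (0 : I → A → ℝ) j (r π)) i (Pi.single b M)) b
        rw [hsum, hsum, Pi.single_eq_same, Pi.single_eq_of_ne hne] at h
        have := le_of_mul_le_mul_left h hi
        linarith [hπ (x fun l => τ l (Function.update (Function.update (0 : I → A → ℝ) j (r π)) i
          (Pi.single b M) l))]
      rwa [hpri] at h
    have hpay : π (x (pr π)) ≤ t (pr π) i := by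
      refine hm.le_payment_of_not_obtains hτ (by omega) (hpr π) i fun M hM hMq => ?_
      rw [hpr_update]
      intro hx
      have hne : c ≠ x (pr π) := by
        intro h
        rw [← h, hc] at hMq
        linarith
      have h := hk (Function.update (Function.update (0 : I → A → ℝ) j (r π)) i
        (Pi.single (x (pr π)) M)) c
      rw [hx, hsum, hsum, Pi.single_eq_same, Pi.single_eq_of_ne hne, hc] at h
      have := le_of_mul_le_mul_left h hi
      linarith
    exact hget.trans ((hS₁ _).2.antitone hpay)
  have hcmp : ∀ π π' : A → ℝ,
      π (x (pr π)) - π (x (pr π')) ≤ π' (x (pr π)) - π' (x (pr π')) := by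
    intro π π'
    have h := hm.value_sub_le hτ hbase j (r π) (r π')
    change r π' (x (pr π)) - r π' (x (pr π')) ≤ r π (x (pr π)) - r π (x (pr π')) at h
    simp only [r] at h
    have hpos : 0 < k i / k j := div_pos hi hj
    refine le_of_mul_le_mul_left ?_ hpos
    linarith
  obtain ⟨c, hc⟩ := exists_eq_minVal w
  have hpc : wtp w c = 0 :=
    (hS₁ c).2.injective ((apply_wtp hS₁ hS₂ c).trans hc.symm)
  -- Prices `y` for `a` and `z` for `b`, the other alternatives being worth their price at best.
  let price : A → A → ℝ → ℝ → A → ℝ := fun a b y z d =>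
    if d = a then y else if d = b then z else wtp w d
  have hpick : ∀ a b y z, a ≠ b → a ≠ c → b ≠ c → 0 ≤ y → 0 ≤ z →
      (w b z < w a y → minVal w < w a y → x (pr (price a b y z)) = a) ∧
      (w a y < w b z → minVal w < w b z → x (pr (price a b y z)) = b) := by
    intro a b y z hab hac hbc hy hz
    have hnn : ∀ d, 0 ≤ price a b y z d := by
      intro d
      simp only [price]
      split_ifs
      exacts [hy, hz, wtp_nonneg hS₁ hS₂ d]
    have h := hbest (price a b y z) hnn ⟨c, by simp [price, hac.symm, hbc.symm, hpc]⟩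
    have ha := h a
    have hb := h b
    generalize x (pr (price a b y z)) = d at ha hb
    simp only [price, hab.symm, if_true, if_false] at ha hb
    constructor
    · intro hlt hmin
      by_contra hda
      simp only [hda, if_false] at ha
      split_ifs at ha with hdb
      · subst hdb
        linarith
      · rw [apply_wtp hS₁ hS₂] at ha
        linarith
    · intro hlt hmin
      by_contra hdb
      simp only [hdb, if_false] at hb
      split_ifs at hb with hda
      · subst hda
        linarith
      · rw [apply_wtp hS₁ hS₂] at hb
        linarith
  have hdiff : ∀ a b y z y' z', a ≠ b → a ≠ c → b ≠ c → 0 ≤ y → 0 ≤ z → 0 ≤ y' → 0 ≤ z' →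
      w b z < w a y → minVal w < w a y → w a y' < w b z' → minVal w < w b z' →
      y - z ≤ y' - z' := by
    intro a b y z y' z' hab hac hbc hy hz hy' hz' h₁ h₂ h₃ h₄
    have h := hcmp (price a b y z) (price a b y' z')
    rw [(hpick a b y z hab hac hbc hy hz).1 h₁ h₂,
      (hpick a b y' z' hab hac hbc hy' hz').2 h₃ h₄] at h
    simpa [price, hab.symm] using h
  refine ⟨hS₁, hS₂, fun a b hv z hz hzb => ?_⟩
  by_contra hne
  have hpa := apply_wtp hS₁ hS₂ a
  have hpb := apply_wtp hS₁ hS₂ b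
  have hzb' : z < wtp w b := by
    refine lt_of_le_of_ne hzb fun h => hne ?_
    rw [h, add_sub_cancel, hpa, hpb]
  have hab : a ≠ b := by
    rintro rfl
    exact hne (by rw [sub_self, add_zero])
  have hb0 : 0 < wtp w b := hz.trans_lt hzb'
  have hva : minVal w < w a 0 := ((minVal_lt_apply_iff hS₁ hS₂).2 hb0).trans_le hv
  have ha0 : 0 < wtp w a := (minVal_lt_apply_iff hS₁ hS₂).1 hva
  have hac : a ≠ c := by
    rintro rfl
    exact hva.ne' hc
  have hbc : b ≠ c := by
    rintro rfl
    exact hb0.ne' hpc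
  rcases lt_or_gt_of_ne hne with hlt | hgt
  · have hnn : 0 ≤ z + (wtp w a - wtp w b) := by
      by_contra! hneg
      have h₁ := (hS₁ a).2 hneg
      have h₂ := (hS₁ b).2.antitone hz
      linarith
    obtain ⟨ε, hε, hlt'⟩ := exists_pos_lt_apply_add (hS₁ b).1
      (max_lt hlt ((minVal_lt_apply_iff hS₁ hS₂).2 hzb'))
    obtain ⟨hb₁, hb₂⟩ := max_lt_iff.1 hlt'
    have hη : 0 < min (ε / 2) (wtp w a) := lt_min (by linarith) ha0
    have hη₁ := min_le_left (ε / 2) (wtp w a)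
    have hη₂ := min_le_right (ε / 2) (wtp w a)
    have hgain : minVal w < w a (wtp w a - min (ε / 2) (wtp w a)) :=
      (minVal_lt_apply_iff hS₁ hS₂).2 (by linarith)
    have h := hdiff a b (wtp w a - min (ε / 2) (wtp w a)) (wtp w b)
      (z + (wtp w a - wtp w b)) (z + ε) hab hac hbc (by linarith) hb0.le hnn (by linarith)
      (by rwa [hpb]) hgain hb₁ hb₂
    linarith
  · obtain ⟨y, hy, hyb, hya, hgt'⟩ : ∃ y, 0 ≤ y ∧ y < wtp w b ∧ 0 ≤ y + (wtp w a - wtp w b) ∧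
        w b y < w a (y + (wtp w a - wtp w b)) := by
      rcases le_or_gt 0 (z + (wtp w a - wtp w b)) with hnn | hneg
      · exact ⟨z, hz, hzb', hnn, hgt⟩
      · have e : wtp w b - wtp w a + (wtp w a - wtp w b) = 0 := by ring
        refine ⟨wtp w b - wtp w a, by linarith, by linarith, e.ge, ?_⟩
        rw [e]
        exact ((hS₁ b).2 (by linarith : (0 : ℝ) < wtp w b - wtp w a)).trans_le hv
    obtain ⟨ε, hε, ha₁⟩ := exists_pos_lt_apply_add (hS₁ a).1 hgt'
    have hη : 0 < min (ε / 2) (wtp w b) := lt_min (by linarith) hb0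
    have hη₁ := min_le_left (ε / 2) (wtp w b)
    have hη₂ := min_le_right (ε / 2) (wtp w b)
    have hgain : minVal w < w b (wtp w b - min (ε / 2) (wtp w b)) :=
      (minVal_lt_apply_iff hS₁ hS₂).2 (by linarith)
    have h := hdiff a b (y + (wtp w a - wtp w b) + ε) y (wtp w a)
      (wtp w b - min (ε / 2) (wtp w b)) hab hac hbc (by linarith) hy ha0.le (by linarith)
      ha₁ (((minVal_lt_apply_iff hS₁ hS₂).2 hyb).trans ha₁) (by rwa [hpa]) hgain
    linarith

end IsFeasible

end Mechanisms

/-- Dictatorship under Pareto efficiency. With `|A| ≥ 3`, (C1), and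
some agent having a non-parallel type (C2'), every DSIC, deterministic, IR, no-subsidy,
Pareto-efficient mechanism is a dictatorship: the dictator gets a most preferred
alternative at zero payment and pays nothing. -/
theorem dictatorship_pareto
    [Fintype A] [Nonempty A] [Fintype I] [DecidableEq I]
    (hA : 3 ≤ Fintype.card A)
    (U : I → Set (Util A))
    (hS : ∀ i, ∀ u ∈ U i, S1 u ∧ S2 u)
    (hC1 : ∀ i, ∃ D : Set (Util A), D ⊆ U i ∧ (∀ u ∈ D, IsParallel u) ∧ UnrestrictedWTP D)
    (hC2' : ∃ i, ∃ u ∈ U i, ¬ IsParallel u)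
    (x : (I → Util A) → A) (t : (I → Util A) → I → ℝ)
    (hDSIC : DSIC U x t) (hIR : IR U x t) (hNS : NoSubsidy U t)
    (hPE : ParetoEfficient U x t) :
    ∃ istar : I, ∀ u : I → Util A, (∀ j, u j ∈ U j) →
      (∀ a : A, u istar a 0 ≤ u istar (x u) 0) ∧ t u istar = 0 := by
  classical
  have hm : IsFeasible U x t := ⟨hS, hDSIC, hIR, hNS⟩
  obtain ⟨n, w, hw, hnp⟩ := hC2'
  have : Nonempty I := ⟨n⟩
  obtain ⟨τ, hτ⟩ := exists_isParallelSection hC1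
  obtain ⟨k, hk0, hk1, hk⟩ := hm.exists_weights hτ hA hPE
  obtain ⟨i, hi⟩ : ∃ i, 0 < k i := by
    by_contra! h
    have := Finset.sum_nonpos fun i (_ : i ∈ Finset.univ) => h i
    linarith
  have hzero : ∀ j, j ≠ i → k j = 0 := by
    intro j hji
    by_contra hj
    have hj' : 0 < k j := lt_of_le_of_ne (hk0 j) (Ne.symm hj)
    have hn : 0 < k n :=
      lt_of_le_of_ne (hk0 n) (hm.weight_ne_zero hτ hA hPE hk hji.symm hi hj' n).symm
    by_cases hni : n = i
    · subst hni
      exact hnp (hm.isParallel_of_weights_pos hτ hA hk hji.symm hn hj' hw)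
    · exact hnp (hm.isParallel_of_weights_pos hτ hA hk hni hn hi hw)
  refine ⟨i, hm.dictator_of_parallel hτ (by omega) i fun v a M hM hvi => ?_⟩
  by_contra hne
  have h := hk v a
  rw [Fintype.sum_eq_single i fun j hj => by rw [hzero j hj, zero_mul],
    Fintype.sum_eq_single i fun j hj => by rw [hzero j hj, zero_mul], hvi, Pi.single_eq_same,
    Pi.single_eq_of_ne hne] at h
  have := le_of_mul_le_mul_left h hi
  linarith
end NQLSC
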